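/- (Indefinite bibasic summation formula) Let p, q, a, b, c be complex numbers such that all denominator factors below are nonzero, and let n be a nonnegative integer. Then ∑_{k=0}^{n} ((1 - a p^k q^k)(1 - b p^k q^{-k}) / ((1-a)(1-b))) · ((a;p)_k (b;p)_k (c;q)_k (a/(bc);q)_k / ((q;q)_k (aq/b;q)_k (ap/c;p)_k (bcp;p)_k)) q^k = (ap;p)_n (bp;p)_n (cq;q)_n (aq/(bc);q)_n / ((q;q)_n (aq/b;q)_n (ap/c;p)_n (bcp;p)_n). -/

import Mathlib

/-- The finite r-shifted factorial `(a;r)_k = ∏_{j=0}^{k-1} (1 - a r^j)`. -/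
noncomputable def qPoch (a r : ℂ) (k : ℕ) : ℂ := ∏ j ∈ Finset.range k, (1 - a * r ^ j)

/-!
The closed form `S n` on the right-hand side satisfies `S (k + 1) - S k = t (k + 1)`, where `t` is
the summand, and `S 0 = t 0 = 1`, so the sum telescopes. With `P = p ^ (k + 1)` and
`Q = q ^ (k + 1)` the difference equation is a rational identity in `a, b, c, P, Q`: the bases
enter only through `P` and `Q`, which is why they may be independent.
-/

section ShiftedFactorial

variable (a r : ℂ) (k : ℕ)

theorem qPoch_zero : qPoch a r 0 = 1 :=
  Finset.prod_range_zero _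

theorem qPoch_succ : qPoch a r (k + 1) = qPoch a r k * (1 - a * r ^ k) :=
  Finset.prod_range_succ _ k

theorem qPoch_succ' : qPoch a r (k + 1) = (1 - a) * qPoch (a * r) r k := by
  simp only [qPoch, Finset.prod_range_succ', pow_zero, mul_one, pow_succ', mul_assoc, mul_comm]

end ShiftedFactorial

/-- The bibasic product `(α, β; p)_k (γ, δ; q)_k`. Numerators in the summation formula have this
form; denominators have it with the two bases exchanged. -/
noncomputable def bibasicPoch (p q α β γ δ : ℂ) (k : ℕ) : ℂ :=
  qPoch α p k * qPoch β p k * qPoch γ q k * qPoch δ q k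

section BibasicPoch

variable (p q α β γ δ : ℂ) (k : ℕ)

theorem bibasicPoch_zero : bibasicPoch p q α β γ δ 0 = 1 := by
  simp only [bibasicPoch, qPoch_zero, mul_one]

theorem bibasicPoch_succ :
    bibasicPoch p q α β γ δ (k + 1) =
      bibasicPoch p q α β γ δ k *
        ((1 - α * p ^ k) * (1 - β * p ^ k) * (1 - γ * q ^ k) * (1 - δ * q ^ k)) := by
  simp only [bibasicPoch, qPoch_succ]
  ring

theorem bibasicPoch_succ' :
    bibasicPoch p q α β γ δ (k + 1) =
      (1 - α) * (1 - β) * (1 - γ) * (1 - δ) *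
        bibasicPoch p q (α * p) (β * p) (γ * q) (δ * q) k := by
  simp only [bibasicPoch, qPoch_succ']
  ring

end BibasicPoch

theorem bibasic_factor_sub {K : Type*} [Field K] {a b c P Q : K}
    (hb : b ≠ 0) (hc : c ≠ 0) (hQ : Q ≠ 0) :
    (1 - a * P) * (1 - b * P) * (1 - c * Q) * (1 - a / (b * c) * Q) -
        (1 - Q) * (1 - a / b * Q) * (1 - a / c * P) * (1 - b * c * P) =
      (1 - a * P * Q) * (1 - b * P / Q) * ((1 - c) * (1 - a / (b * c))) * Q := by
  field_simp
  ring

/-- The numerator `(ap, bp; p)_n (cq, aq/(bc); q)_n` of the closed form. -/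
noncomputable def bibasicNum (p q a b c : ℂ) (n : ℕ) : ℂ :=
  bibasicPoch p q (a * p) (b * p) (c * q) (a * q / (b * c)) n

/-- The denominator `(q, aq/b; q)_n (ap/c, bcp; p)_n`, common to the summand and the closed
form. -/
noncomputable def bibasicDen (p q a b c : ℂ) (n : ℕ) : ℂ :=
  bibasicPoch q p q (a * q / b) (a * p / c) (b * c * p) n

/-- The summand of the indefinite bibasic summation formula. -/
noncomputable def bibasicTerm (p q a b c : ℂ) (k : ℕ) : ℂ :=
  (1 - a * p ^ k * q ^ k) * (1 - b * p ^ k / q ^ k) / ((1 - a) * (1 - b)) *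
    (bibasicPoch p q a b c (a / (b * c)) k / bibasicDen p q a b c k) * q ^ k

section Telescoping

variable {p q a b c : ℂ}

theorem bibasicTerm_zero (ha1 : a ≠ 1) (hb1 : b ≠ 1) : bibasicTerm p q a b c 0 = 1 := by
  have ha : 1 - a ≠ 0 := sub_ne_zero.mpr ha1.symm
  have hb : 1 - b ≠ 0 := sub_ne_zero.mpr hb1.symm
  simp [bibasicTerm, bibasicDen, bibasicPoch_zero, ha, hb]

theorem bibasicNum_div_bibasicDen_zero :
    bibasicNum p q a b c 0 / bibasicDen p q a b c 0 = 1 := by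
  simp only [bibasicNum, bibasicDen, bibasicPoch_zero, div_one]

theorem bibasicNum_succ (k : ℕ) :
    bibasicNum p q a b c (k + 1) =
      bibasicNum p q a b c k *
        ((1 - a * p ^ (k + 1)) * (1 - b * p ^ (k + 1)) * (1 - c * q ^ (k + 1)) *
          (1 - a / (b * c) * q ^ (k + 1))) := by
  rw [bibasicNum, bibasicPoch_succ, ← bibasicNum]
  ring

theorem bibasicDen_succ (k : ℕ) :
    bibasicDen p q a b c (k + 1) =
      bibasicDen p q a b c k *
        ((1 - q ^ (k + 1)) * (1 - a / b * q ^ (k + 1)) * (1 - a / c * p ^ (k + 1)) *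
          (1 - b * c * p ^ (k + 1))) := by
  rw [bibasicDen, bibasicPoch_succ, ← bibasicDen]
  ring

theorem bibasicTerm_succ (ha1 : a ≠ 1) (hb1 : b ≠ 1) (k : ℕ) :
    bibasicTerm p q a b c (k + 1) =
      bibasicNum p q a b c k *
        ((1 - a * p ^ (k + 1) * q ^ (k + 1)) * (1 - b * p ^ (k + 1) / q ^ (k + 1)) *
          ((1 - c) * (1 - a / (b * c))) * q ^ (k + 1)) / bibasicDen p q a b c (k + 1) := by
  have ha : 1 - a ≠ 0 := sub_ne_zero.mpr ha1.symm
  have hb : 1 - b ≠ 0 := sub_ne_zero.mpr hb1.symm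
  rw [bibasicTerm, bibasicPoch_succ', div_mul_eq_mul_div a, ← bibasicNum]
  field_simp

theorem bibasicTerm_succ_eq_sub (hq0 : q ≠ 0) (hb0 : b ≠ 0) (hc0 : c ≠ 0)
    (ha1 : a ≠ 1) (hb1 : b ≠ 1) {k : ℕ} (hden : bibasicDen p q a b c (k + 1) ≠ 0) :
    bibasicTerm p q a b c (k + 1) =
      bibasicNum p q a b c (k + 1) / bibasicDen p q a b c (k + 1) -
        bibasicNum p q a b c k / bibasicDen p q a b c k := by
  rw [bibasicTerm_succ ha1 hb1, ← bibasic_factor_sub hb0 hc0 (pow_ne_zero _ hq0), mul_sub,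
    sub_div, ← bibasicNum_succ, bibasicDen_succ,
    mul_div_mul_right _ _ (right_ne_zero_of_mul (bibasicDen_succ k ▸ hden))]

theorem sum_range_succ_bibasicTerm (hq0 : q ≠ 0) (hb0 : b ≠ 0) (hc0 : c ≠ 0)
    (ha1 : a ≠ 1) (hb1 : b ≠ 1) {n : ℕ} (hden : bibasicDen p q a b c n ≠ 0) :
    ∑ k ∈ Finset.range (n + 1), bibasicTerm p q a b c k =
      bibasicNum p q a b c n / bibasicDen p q a b c n := by
  induction n with
  | zero =>
    rw [Finset.sum_range_one, bibasicTerm_zero ha1 hb1, bibasicNum_div_bibasicDen_zero]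
  | succ n ih =>
    have hden_n : bibasicDen p q a b c n ≠ 0 :=
      left_ne_zero_of_mul (bibasicDen_succ n ▸ hden)
    rw [Finset.sum_range_succ, ih hden_n, bibasicTerm_succ_eq_sub hq0 hb0 hc0 ha1 hb1 hden,
      add_sub_cancel]

end Telescoping

/-- The indefinite bibasic summation formula (Gasper):
`∑_{k=0}^n ((1-ap^kq^k)(1-bp^kq^{-k})/((1-a)(1-b)))
    ((a,b;p)_k (c,a/(bc);q)_k/((q,aq/b;q)_k (ap/c,bcp;p)_k)) q^k
  = ((ap,bp;p)_n (cq,aq/(bc);q)_n)/((q,aq/b;q)_n (ap/c,bcp;p)_n)`,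
assuming nonzero denominator factors. -/
theorem indefinite_bibasic_summation (p q a b c : ℂ) (n : ℕ)
    (hq0 : q ≠ 0) (hb0 : b ≠ 0) (hc0 : c ≠ 0) (ha1 : a ≠ 1) (hb1 : b ≠ 1)
    (hden : ∀ k ≤ n, qPoch q q k ≠ 0 ∧ qPoch (a * q / b) q k ≠ 0 ∧
      qPoch (a * p / c) p k ≠ 0 ∧ qPoch (b * c * p) p k ≠ 0) :
    ∑ k ∈ Finset.range (n + 1),
        (1 - a * p ^ k * q ^ k) * (1 - b * p ^ k / q ^ k) / ((1 - a) * (1 - b)) *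
          (qPoch a p k * qPoch b p k * qPoch c q k * qPoch (a / (b * c)) q k /
            (qPoch q q k * qPoch (a * q / b) q k * qPoch (a * p / c) p k *
              qPoch (b * c * p) p k)) * q ^ k =
      qPoch (a * p) p n * qPoch (b * p) p n * qPoch (c * q) q n *
          qPoch (a * q / (b * c)) q n /
        (qPoch q q n * qPoch (a * q / b) q n * qPoch (a * p / c) p n *
          qPoch (b * c * p) p n) := by
  obtain ⟨hq, haqb, hapc, hbcp⟩ := hden n le_rfl
  exact sum_range_succ_bibasicTerm hq0 hb0 hc0 ha1 hb1
    (mul_ne_zero (mul_ne_zero (mul_ne_zero hq haqb) hapc) hbcp)
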